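/- Let H, M, κ, φ̇₀ be positive reals. Let k₁, k₂, k₃, k₄ ∈ ℝ³ be nonzero vectors with k₁ + k₂ + k₃ + k₄ = 0 and k₁ + k₂ ≠ 0; put s := ‖k₁+k₂‖, ŝ := (k₁+k₂)/s, kₐ := ‖kₐ‖, k̂ₐ := kₐ/kₐ, E_L := k₁+k₂+s, e₂ := k₁k₂ + s(k₁+k₂), e₃ := k₁k₂s, E_R := k₃+k₄+s, ẽ₂ := k₃k₄ + s(k₃+k₄), ẽ₃ := k₃k₄s. Let n̂ be a unit vector not parallel to ŝ and, for h ∈ {+1,−1}, define: the graviton power spectrum B_γγ(s) := H²/(M²s³); its parity-odd Chern–Simons correction δB^{(h)}_γγ(s) := h·π·κ·H³/(M²s³); the left mixed bispectrum B_L^{(h)} := (H⁶/(2M²φ̇₀²))·√2·conj(k₁·ê^{h}(ŝ))·conj(k₂·ê^{h}(ŝ))·(−E_L³ + E_L e₂ + e₃)/(k₁³k₂³s³·E_L²); and the right mixed bispectrum B_R^{(h)} := (H⁶/(2M²φ̇₀²))·√2·(k₃·ê^{h}(ŝ))·(k₄·ê^{h}(ŝ))·(−E_R³ + E_R ẽ₂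 + ẽ₃)/(k₃³k₄³s³·E_R²). Then the s-channel correlator-to-correlator factorisation (double copy) identity holds: Σ_{h∈{+1,−1}} B_L^{(h)} · δB^{(h)}_γγ(s) · B_R^{(h)} / (B_γγ(s))² = i·(H/φ̇₀)⁴·(π κ H⁷/(2M²)) · [ k̂₁·k̂₃ − (k̂₁·ŝ)(k̂₃·ŝ) ] · [ ŝ·(k̂₂×k̂₄) ] · (E_L³ − E_L e₂ − e₃)(E_R³ − E_R ẽ₂ − ẽ₃) / ( (k₁k₂k₃k₄)² · s³ · E_L² · E_R² ), as an identity in ℂ. This is the exact rational, factorised form of the s-channel parity-odd curvature trispectrum in dynamical Chern–Simons gravity, expressed entirely through the graviton power spectrum, its parity-odd correction, and the Maldacena curvature–graviton bispectrum. -/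

import Mathlib

open scoped BigOperators

noncomputable section

/-- Euclidean dot product on ℝ³ (realised as `Fin 3 → ℝ`). -/
def dot3 (v w : Fin 3 → ℝ) : ℝ := ∑ i, v i * w i

/-- Cross product on ℝ³. -/
def cross3 (v w : Fin 3 → ℝ) : Fin 3 → ℝ :=
  ![v 1 * w 2 - v 2 * w 1, v 2 * w 0 - v 0 * w 2, v 0 * w 1 - v 1 * w 0]

/-- Euclidean norm on ℝ³. -/
def norm3 (v : Fin 3 → ℝ) : ℝ := Real.sqrt (∑ i, v i ^ 2)

/-- The unit vector in the direction of `v`. -/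
def unit3 (v : Fin 3 → ℝ) : Fin 3 → ℝ := fun i => v i / norm3 v

/-- The complex polarisation vector
`ê^{h}(ŝ) = (n̂ − (n̂·ŝ)ŝ + h i ŝ×n̂)/√(2(1−(n̂·ŝ)²))` for helicity `h = ±1`. -/
def polVec (h : ℝ) (s n : Fin 3 → ℝ) : Fin 3 → ℂ := fun i =>
  (((n i - dot3 n s * s i : ℝ) : ℂ) + (h : ℂ) * Complex.I * ((cross3 s n i : ℝ) : ℂ)) /
    ((Real.sqrt (2 * (1 - dot3 n s ^ 2)) : ℝ) : ℂ)

/-- The bilinear dot product of a real vector with a complex vector. -/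
def dotRC (v : Fin 3 → ℝ) (z : Fin 3 → ℂ) : ℂ := ∑ i, (v i : ℂ) * z i

/-!
The polarisation vector is `ê^h = (m + h i ŝ×m) / √(2 m·m)` with `m` the part of `n̂` orthogonal
to `ŝ`, and `m`, `ŝ×m` is an orthogonal frame of the plane `ŝ^⊥`. Expanding in this frame gives
`conj (v·ê^h) (w·ê^h) = (v_⊥·w_⊥ + h i ŝ·(v×w)) / 2`, which no longer mentions `n̂`. Pair the four
contractions of the exchange diagram as `(1,3)` and `(2,4)`. Momentum conservation makes `k₂` and
`k₄` the reflections of `k₁` and `k₃` transversely to `ŝ`, so both pairs give the same value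
`(P + h i T) / 2`. The Chern–Simons correction is odd in `h`, so the helicity sum keeps only the
cross term `i P T` of the square; the remaining factors are rational prefactors.
-/

open scoped Matrix ComplexConjugate

section Transverse

variable {R ι : Type*} [CommRing R] [Fintype ι]

/-- The component `v_⊥ = v - (v·s) s` of `v` orthogonal to `s`; it is the orthogonal projection
when `s·s = 1`, which is a hypothesis of the lemmas that need it. -/
def transversePart (s v : ι → R) : ι → R := v - (v ⬝ᵥ s) • s

lemma dotProduct_transversePart_self {s : ι → R} (hs : s ⬝ᵥ s = 1) (v : ι → R) :
    s ⬝ᵥ transversePart s v = 0 := by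
  simp [transversePart, dotProduct_comm v s, hs]

lemma transversePart_dotProduct_transversePart {s : ι → R} (hs : s ⬝ᵥ s = 1) (v w : ι → R) :
    transversePart s v ⬝ᵥ transversePart s w = v ⬝ᵥ w - v ⬝ᵥ s * w ⬝ᵥ s := by
  rw [transversePart, sub_dotProduct, smul_dotProduct, dotProduct_transversePart_self hs,
    transversePart, dotProduct_sub, dotProduct_smul]
  simp [mul_comm]

lemma transversePart_eq_neg_of_add_eq_smul {s v w : ι → R} {c : R} (hs : s ⬝ᵥ s = 1)
    (h : v + w = c • s) : transversePart s w = -transversePart s v := by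
  obtain rfl : w = c • s - v := eq_sub_of_add_eq' h
  simp only [transversePart, sub_dotProduct, smul_dotProduct, hs]
  module

lemma cross_transversePart (s v : Fin 3 → R) : s ⨯₃ transversePart s v = s ⨯₃ v := by
  simp [transversePart]

lemma dot_transversePart_cross_transversePart (s v w : Fin 3 → R) :
    s ⬝ᵥ transversePart s v ⨯₃ transversePart s w = s ⬝ᵥ v ⨯₃ w := by
  simp [transversePart]

end Transverse

section Frame

variable {R : Type*} [CommRing R] {s m : Fin 3 → R}

lemma dot_mul_dot_cross_sub (hsm : s ⬝ᵥ m = 0) (v w : Fin 3 → R) :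
    v ⬝ᵥ m * w ⬝ᵥ s ⨯₃ m - v ⬝ᵥ s ⨯₃ m * w ⬝ᵥ m = m ⬝ᵥ m * s ⬝ᵥ v ⨯₃ w := by
  rw [← cross_dot_cross, cross_cross_eq_smul_sub_smul', hsm, zero_smul, sub_zero,
    dotProduct_smul, smul_eq_mul, dotProduct_comm s]

lemma dot_mul_dot_add (hs : s ⬝ᵥ s = 1) (hsm : s ⬝ᵥ m = 0) (v w : Fin 3 → R) :
    v ⬝ᵥ m * w ⬝ᵥ m + v ⬝ᵥ s ⨯₃ m * w ⬝ᵥ s ⨯₃ m = m ⬝ᵥ m * (v ⬝ᵥ w - v ⬝ᵥ s * w ⬝ᵥ s) := by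
  -- Replacing `w` by its quarter turn `w × s` about `s` turns the antisymmetric identity into this.
  have turned := dot_mul_dot_cross_sub hsm v (w ⨯₃ s)
  have turned_cross : w ⨯₃ s ⬝ᵥ s ⨯₃ m = -(w ⬝ᵥ m) := by
    rw [cross_dot_cross, hsm, hs]
    ring
  have turned_dot : w ⨯₃ s ⬝ᵥ m = w ⬝ᵥ s ⨯₃ m := by
    rw [dotProduct_comm, triple_product_permutation]
  have triple : s ⬝ᵥ v ⨯₃ (w ⨯₃ s) = v ⬝ᵥ s * w ⬝ᵥ s - v ⬝ᵥ w := by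
    rw [cross_cross_eq_smul_sub_smul', dotProduct_sub, dotProduct_smul, dotProduct_smul, hs,
      dotProduct_comm s w, dotProduct_comm w v]
    simp
  rw [turned_cross, turned_dot, triple] at turned
  linear_combination -turned

end Frame

section Norm

lemma dot3_eq_dotProduct (v w : Fin 3 → ℝ) : dot3 v w = v ⬝ᵥ w := rfl

lemma cross3_eq_crossProduct (v w : Fin 3 → ℝ) : cross3 v w = v ⨯₃ w := rfl

lemma unit3_eq_smul (v : Fin 3 → ℝ) : unit3 v = (norm3 v)⁻¹ • v := by
  ext i
  simp [unit3, div_eq_inv_mul]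

lemma norm3_eq_sqrt_dotProduct (v : Fin 3 → ℝ) : norm3 v = √(v ⬝ᵥ v) := by
  simp [norm3, dotProduct, sq]

lemma norm3_pos {v : Fin 3 → ℝ} (hv : v ≠ 0) : 0 < norm3 v := by
  rw [norm3_eq_sqrt_dotProduct]
  exact Real.sqrt_pos.mpr (Matrix.dotProduct_self_star_pos_iff.mpr hv)

lemma norm3_smul_unit3 {v : Fin 3 → ℝ} (hv : v ≠ 0) : norm3 v • unit3 v = v := by
  rw [unit3_eq_smul, smul_inv_smul₀ (norm3_pos hv).ne']

lemma unit3_dotProduct_self {v : Fin 3 → ℝ} (hv : v ≠ 0) : unit3 v ⬝ᵥ unit3 v = 1 := by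
  have norm_sq : norm3 v ^ 2 = v ⬝ᵥ v := by
    rw [norm3_eq_sqrt_dotProduct]
    exact Real.sq_sqrt (dotProduct_self_star_nonneg v)
  rw [unit3_eq_smul, smul_dotProduct, dotProduct_smul, ← norm_sq]
  have := (norm3_pos hv).ne'
  simp only [smul_eq_mul]
  field_simp

end Norm

section Polarisation

variable {s n : Fin 3 → ℝ}

lemma one_sub_dotProduct_sq_pos (hs : s ⬝ᵥ s = 1) (hn : n ⬝ᵥ n = 1)
    (hns : ¬ ∃ c : ℝ, n = c • s) : 0 < 1 - (n ⬝ᵥ s) ^ 2 := by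
  have transverse_ne : transversePart s n ≠ 0 := fun h ↦ hns ⟨n ⬝ᵥ s, sub_eq_zero.mp h⟩
  have := Matrix.dotProduct_self_star_pos_iff.mpr transverse_ne
  rwa [star_trivial, transversePart_dotProduct_transversePart hs, hn, ← sq] at this

lemma dotRC_polVec (h : ℝ) (s n v : Fin 3 → ℝ) :
    dotRC v (polVec h s n) =
      ((v ⬝ᵥ transversePart s n : ℝ) + h * Complex.I * (v ⬝ᵥ s ⨯₃ transversePart s n : ℝ)) /
        (√(2 * (1 - (n ⬝ᵥ s) ^ 2)) : ℝ) := by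
  rw [cross_transversePart]
  simp only [dotRC, polVec, transversePart, dot3_eq_dotProduct,
    cross3_eq_crossProduct, dotProduct, Fin.sum_univ_three, Pi.sub_apply, Pi.smul_apply,
    smul_eq_mul]
  push_cast
  ring

lemma conj_dotRC_polVec_mul_dotRC_polVec (hs : s ⬝ᵥ s = 1) (hn : n ⬝ᵥ n = 1)
    (hns : ¬ ∃ c : ℝ, n = c • s) {h : ℝ} (hh : h ^ 2 = 1) (v w : Fin 3 → ℝ) :
    conj (dotRC v (polVec h s n)) * dotRC w (polVec h s n) =
      ((transversePart s v ⬝ᵥ transversePart s w : ℝ) +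
        h * Complex.I * (s ⬝ᵥ v ⨯₃ w : ℝ)) / 2 := by
  set m := transversePart s n with hm
  set r := 1 - (n ⬝ᵥ s) ^ 2 with hr
  have r_pos : 0 < r := one_sub_dotProduct_sq_pos hs hn hns
  have hsm : s ⬝ᵥ m = 0 := dotProduct_transversePart_self hs n
  have hmm : m ⬝ᵥ m = r := by
    rw [hm, transversePart_dotProduct_transversePart hs, hn, hr, sq]
  have even : ((v ⬝ᵥ m : ℝ) * (w ⬝ᵥ m : ℝ) + (v ⬝ᵥ s ⨯₃ m : ℝ) * (w ⬝ᵥ s ⨯₃ m : ℝ) : ℂ) =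
      r * (transversePart s v ⬝ᵥ transversePart s w : ℝ) := by
    rw [transversePart_dotProduct_transversePart hs, ← hmm]
    exact_mod_cast dot_mul_dot_add hs hsm v w
  have odd : ((v ⬝ᵥ m : ℝ) * (w ⬝ᵥ s ⨯₃ m : ℝ) - (v ⬝ᵥ s ⨯₃ m : ℝ) * (w ⬝ᵥ m : ℝ) : ℂ) =
      r * (s ⬝ᵥ v ⨯₃ w : ℝ) := by
    rw [← hmm]
    exact_mod_cast dot_mul_dot_cross_sub hsm v w
  have sqrt_sq : ((√(2 * r) : ℝ) : ℂ) ^ 2 = 2 * r := by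
    exact_mod_cast Real.sq_sqrt (by positivity : 0 ≤ 2 * r)
  have hh' : (h : ℂ) ^ 2 = 1 := by exact_mod_cast hh
  have r_ne : (r : ℂ) ≠ 0 := by exact_mod_cast r_pos.ne'
  rw [dotRC_polVec, dotRC_polVec, ← hm, ← hr]
  simp only [map_div₀, map_add, map_mul, Complex.conj_ofReal, Complex.conj_I]
  rw [div_mul_div_comm, ← sq, sqrt_sq, div_eq_div_iff (by simpa using r_ne) two_ne_zero]
  linear_combination 2 * even + 2 * h * Complex.I * odd +
    2 * (v ⬝ᵥ s ⨯₃ m : ℝ) * (w ⬝ᵥ s ⨯₃ m : ℝ) * (hh' - h ^ 2 * Complex.I_sq)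

/-- The contraction of the momenta `k₁, k₂` (conjugated) and `k₃, k₄` with the polarisation vector
of helicity `h` of the graviton exchanged along `s`. -/
def exchangeContraction (s n k₁ k₂ k₃ k₄ : Fin 3 → ℝ) (h : ℝ) : ℂ :=
  conj (dotRC k₁ (polVec h s n)) * conj (dotRC k₂ (polVec h s n)) *
    (dotRC k₃ (polVec h s n) * dotRC k₄ (polVec h s n))

variable {k₁ k₂ k₃ k₄ : Fin 3 → ℝ} {a b : ℝ}

lemma exchangeContraction_eq_sq (hs : s ⬝ᵥ s = 1) (hn : n ⬝ᵥ n = 1)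
    (hns : ¬ ∃ c : ℝ, n = c • s) (h₁₂ : k₁ + k₂ = a • s) (h₃₄ : k₃ + k₄ = b • s)
    {h : ℝ} (hh : h ^ 2 = 1) :
    exchangeContraction s n k₁ k₂ k₃ k₄ h =
      (((transversePart s k₁ ⬝ᵥ transversePart s k₃ : ℝ) +
        h * Complex.I * (s ⬝ᵥ k₂ ⨯₃ k₄ : ℝ)) / 2) ^ 2 := by
  have reflect₁₂ := transversePart_eq_neg_of_add_eq_smul hs h₁₂
  have reflect₃₄ := transversePart_eq_neg_of_add_eq_smul hs h₃₄
  have dot_eq : transversePart s k₂ ⬝ᵥ transversePart s k₄ =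
      transversePart s k₁ ⬝ᵥ transversePart s k₃ := by
    rw [reflect₁₂, reflect₃₄, neg_dotProduct_neg]
  have triple_eq : s ⬝ᵥ k₂ ⨯₃ k₄ = s ⬝ᵥ k₁ ⨯₃ k₃ := by
    rw [← dot_transversePart_cross_transversePart, reflect₁₂, reflect₃₄, map_neg, map_neg,
      LinearMap.neg_apply, neg_neg, dot_transversePart_cross_transversePart]
  rw [exchangeContraction, mul_mul_mul_comm, conj_dotRC_polVec_mul_dotRC_polVec hs hn hns hh,
    conj_dotRC_polVec_mul_dotRC_polVec hs hn hns hh, dot_eq, triple_eq, sq]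

lemma exchangeContraction_one_sub_neg_one (hs : s ⬝ᵥ s = 1) (hn : n ⬝ᵥ n = 1)
    (hns : ¬ ∃ c : ℝ, n = c • s) (h₁₂ : k₁ + k₂ = a • s) (h₃₄ : k₃ + k₄ = b • s) :
    exchangeContraction s n k₁ k₂ k₃ k₄ 1 - exchangeContraction s n k₁ k₂ k₃ k₄ (-1) =
      Complex.I * (transversePart s k₁ ⬝ᵥ transversePart s k₃ : ℝ) *
        (s ⬝ᵥ k₂ ⨯₃ k₄ : ℝ) := by
  rw [exchangeContraction_eq_sq hs hn hns h₁₂ h₃₄ (one_pow 2),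
    exchangeContraction_eq_sq hs hn hns h₁₂ h₃₄ neg_one_sq]
  push_cast
  ring

lemma exchangeContraction_one_sub_neg_one_div_norm3 (hs : s ⬝ᵥ s = 1) (hn : n ⬝ᵥ n = 1)
    (hns : ¬ ∃ c : ℝ, n = c • s) (h₁₂ : k₁ + k₂ = a • s) (h₃₄ : k₃ + k₄ = b • s) :
    (exchangeContraction s n k₁ k₂ k₃ k₄ 1 - exchangeContraction s n k₁ k₂ k₃ k₄ (-1)) /
        (norm3 k₁ * norm3 k₂ * norm3 k₃ * norm3 k₄) =
      Complex.I * (dot3 (unit3 k₁) (unit3 k₃) - dot3 (unit3 k₁) s * dot3 (unit3 k₃) s : ℝ) *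
        (dot3 s (cross3 (unit3 k₂) (unit3 k₄)) : ℝ) := by
  rw [exchangeContraction_one_sub_neg_one hs hn hns h₁₂ h₃₄,
    transversePart_dotProduct_transversePart hs]
  simp only [dot3_eq_dotProduct, cross3_eq_crossProduct, unit3_eq_smul, map_smul,
    LinearMap.smul_apply, smul_dotProduct, dotProduct_smul, smul_eq_mul]
  push_cast
  ring

end Polarisation

section Spectra

/-- The graviton power spectrum `B_γγ(s)`. -/
def gravitonSpectrum (H M s : ℝ) : ℝ := H ^ 2 / (M ^ 2 * s ^ 3)

/-- The parity-odd Chern–Simons correction `δB_γγ^{(h)}(s)` to the graviton power spectrum. -/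
def chernSimonsCorrection (H M κ s h : ℝ) : ℝ := h * Real.pi * κ * H ^ 3 / (M ^ 2 * s ^ 3)

/-- The numerator `-E³ + E e₂ + e₃` of the curvature–curvature–graviton bispectrum, where `E`, `e₂`,
`e₃` are the elementary symmetric polynomials of the three energies `K`, `K'`, `s`. -/
def bispectrumShape (K K' s : ℝ) : ℝ :=
  -(K + K' + s) ^ 3 + (K + K' + s) * (K * K' + s * (K + K')) + K * K' * s

/-- The mixed curvature–curvature–graviton bispectrum with curvature energies `K`, `K'` and graviton
energy `s`; `a` and `a'` are the contractions of the curvature momenta with the polarisation vector,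
conjugated or not according to the side of the diagram. -/
def mixedBispectrum (H M φd K K' s : ℝ) (a a' : ℂ) : ℂ :=
  ((H ^ 6 / (2 * M ^ 2 * φd ^ 2) : ℝ) : ℂ) * (√2 : ℝ) * a * a' * (bispectrumShape K K' s : ℝ) /
    ((K ^ 3 * K' ^ 3 * s ^ 3 * (K + K' + s) ^ 2 : ℝ) : ℂ)

/-- The factor of the gluing of two mixed bispectra along a graviton that depends neither on the
helicity nor on the directions of the momenta. -/
def exchangeAmplitude (H M κ φd K₁ K₂ K₃ K₄ s : ℝ) : ℝ :=
  (H / φd) ^ 4 * (Real.pi * κ * H ^ 7 / (2 * M ^ 2)) *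
    (bispectrumShape K₁ K₂ s * bispectrumShape K₃ K₄ s) /
    ((K₁ * K₂ * K₃ * K₄) ^ 2 * s ^ 3 * (K₁ + K₂ + s) ^ 2 * (K₃ + K₄ + s) ^ 2)

lemma mixedBispectrum_mul_correction_mul_mixedBispectrum {H M s : ℝ} (hH : H ≠ 0) (hM : M ≠ 0)
    (hs : s ≠ 0) (κ φd K₁ K₂ K₃ K₄ h : ℝ) (a₁ a₂ a₃ a₄ : ℂ) :
    mixedBispectrum H M φd K₁ K₂ s a₁ a₂ * chernSimonsCorrection H M κ s h *
        mixedBispectrum H M φd K₃ K₄ s a₃ a₄ / (gravitonSpectrum H M s) ^ 2 =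
      h * exchangeAmplitude H M κ φd K₁ K₂ K₃ K₄ s *
        (a₁ * a₂ * (a₃ * a₄) / (K₁ * K₂ * K₃ * K₄)) := by
  have sqrt_sq : ((√2 : ℝ) : ℂ) ^ 2 = 2 := by
    exact_mod_cast Real.sq_sqrt (zero_le_two : (0 : ℝ) ≤ 2)
  have coupling : ((H ^ 6 / (2 * M ^ 2 * φd ^ 2) / s ^ 3) ^ 2 * chernSimonsCorrection H M κ s h /
      gravitonSpectrum H M s ^ 2 : ℂ) =
      h * ((H / φd) ^ 4 * (Real.pi * κ * H ^ 7 / (2 * M ^ 2)) / (2 * s ^ 3)) := by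
    norm_cast
    rw [chernSimonsCorrection, gravitonSpectrum]
    field_simp
  simp only [mixedBispectrum, exchangeAmplitude]
  push_cast
  generalize (K₁ + K₂ + s : ℂ) = EL, (K₃ + K₄ + s : ℂ) = ER
  calc
    _ = ((√2 : ℝ) : ℂ) ^ 2 * ((H ^ 6 / (2 * M ^ 2 * φd ^ 2) / s ^ 3) ^ 2 *
          chernSimonsCorrection H M κ s h / gravitonSpectrum H M s ^ 2) *
        (bispectrumShape K₁ K₂ s * bispectrumShape K₃ K₄ s /
          ((K₁ * K₂ * K₃ * K₄) ^ 3 * EL ^ 2 * ER ^ 2)) *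
        (a₁ * a₂ * (a₃ * a₄)) := by
      ring
    _ = _ := by
      rw [sqrt_sq, coupling]
      ring

end Spectra

/-- The s-channel correlator-to-correlator factorisation (double copy) identity of
dynamical Chern–Simons gravity: the parity-odd curvature trispectrum, built from
the graviton power spectrum `B_γγ`, its parity-odd Chern–Simons correction
`δB^{(h)}_γγ`, and the Maldacena curvature–graviton mixed bispectra `B_L`, `B_R`,
takes the exact rational factorised form stated on the right-hand side. -/
theorem chernSimons_CCF_schannel
    (H M κ φd : ℝ) (hH : 0 < H) (hM : 0 < M) (hκ : 0 < κ) (hφd : 0 < φd)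
    (k₁ k₂ k₃ k₄ : Fin 3 → ℝ)
    (hk₁ : k₁ ≠ 0) (hk₂ : k₂ ≠ 0) (hk₃ : k₃ ≠ 0) (hk₄ : k₄ ≠ 0)
    (hsum : k₁ + k₂ + k₃ + k₄ = 0) (hs12 : k₁ + k₂ ≠ 0)
    (n : Fin 3 → ℝ) (hn : dot3 n n = 1)
    (hnpar : ¬ ∃ c : ℝ, n = c • unit3 (k₁ + k₂)) :
    (let s : ℝ := norm3 (k₁ + k₂)
     let shat : Fin 3 → ℝ := unit3 (k₁ + k₂)
     let K₁ : ℝ := norm3 k₁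
     let K₂ : ℝ := norm3 k₂
     let K₃ : ℝ := norm3 k₃
     let K₄ : ℝ := norm3 k₄
     let EL : ℝ := K₁ + K₂ + s
     let e₂ : ℝ := K₁ * K₂ + s * (K₁ + K₂)
     let e₃ : ℝ := K₁ * K₂ * s
     let ER : ℝ := K₃ + K₄ + s
     let f₂ : ℝ := K₃ * K₄ + s * (K₃ + K₄)
     let f₃ : ℝ := K₃ * K₄ * s
     -- graviton power spectrum
     let Bγγ : ℝ := H ^ 2 / (M ^ 2 * s ^ 3)
     -- parity-odd Chern–Simons correction to the graviton power spectrum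
     let δBγγ : ℝ → ℝ := fun h => h * Real.pi * κ * H ^ 3 / (M ^ 2 * s ^ 3)
     -- left mixed bispectrum
     let BL : ℝ → ℂ := fun h =>
       ((H ^ 6 / (2 * M ^ 2 * φd ^ 2) : ℝ) : ℂ) * ((Real.sqrt 2 : ℝ) : ℂ) *
         starRingEnd ℂ (dotRC k₁ (polVec h shat n)) *
         starRingEnd ℂ (dotRC k₂ (polVec h shat n)) *
         ((-EL ^ 3 + EL * e₂ + e₃ : ℝ) : ℂ) /
         ((K₁ ^ 3 * K₂ ^ 3 * s ^ 3 * EL ^ 2 : ℝ) : ℂ)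
     -- right mixed bispectrum
     let BR : ℝ → ℂ := fun h =>
       ((H ^ 6 / (2 * M ^ 2 * φd ^ 2) : ℝ) : ℂ) * ((Real.sqrt 2 : ℝ) : ℂ) *
         dotRC k₃ (polVec h shat n) * dotRC k₄ (polVec h shat n) *
         ((-ER ^ 3 + ER * f₂ + f₃ : ℝ) : ℂ) /
         ((K₃ ^ 3 * K₄ ^ 3 * s ^ 3 * ER ^ 2 : ℝ) : ℂ)
     BL 1 * ((δBγγ 1 : ℝ) : ℂ) * BR 1 / ((Bγγ : ℝ) : ℂ) ^ 2
       + BL (-1) * ((δBγγ (-1) : ℝ) : ℂ) * BR (-1) / ((Bγγ : ℝ) : ℂ) ^ 2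
       = Complex.I * (((H / φd) ^ 4 : ℝ) : ℂ) *
           ((Real.pi * κ * H ^ 7 / (2 * M ^ 2) : ℝ) : ℂ) *
           ((dot3 (unit3 k₁) (unit3 k₃)
               - dot3 (unit3 k₁) shat * dot3 (unit3 k₃) shat : ℝ) : ℂ) *
           ((dot3 shat (cross3 (unit3 k₂) (unit3 k₄)) : ℝ) : ℂ) *
           (((EL ^ 3 - EL * e₂ - e₃) * (ER ^ 3 - ER * f₂ - f₃) : ℝ) : ℂ) /
           (((K₁ * K₂ * K₃ * K₄) ^ 2 * s ^ 3 * EL ^ 2 * ER ^ 2 : ℝ) : ℂ)) := by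
  have hs := unit3_dotProduct_self hs12
  have h₁₂ := (norm3_smul_unit3 hs12).symm
  have h₃₄ : k₃ + k₄ = (-norm3 (k₁ + k₂)) • unit3 (k₁ + k₂) := by
    rw [neg_smul, ← h₁₂]
    linear_combination hsum
  intro s shat K₁ K₂ K₃ K₄ EL e₂ e₃ ER f₂ f₃ Bγγ δBγγ BL BR
  let X := exchangeContraction shat n k₁ k₂ k₃ k₄
  let A := exchangeAmplitude H M κ φd K₁ K₂ K₃ K₄ s
  have glued (h : ℝ) : BL h * (δBγγ h : ℂ) * BR h / (Bγγ : ℂ) ^ 2 =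
      h * A * (X h / (K₁ * K₂ * K₃ * K₄)) :=
    mixedBispectrum_mul_correction_mul_mixedBispectrum hH.ne' hM.ne' (norm3_pos hs12).ne' ..
  have parity_odd : (X 1 - X (-1)) / (K₁ * K₂ * K₃ * K₄) = Complex.I * _ * _ :=
    exchangeContraction_one_sub_neg_one_div_norm3 hs hn hnpar h₁₂ h₃₄
  have amplitude_eq : A = (H / φd) ^ 4 * (Real.pi * κ * H ^ 7 / (2 * M ^ 2)) *
      ((EL ^ 3 - EL * e₂ - e₃) * (ER ^ 3 - ER * f₂ - f₃)) /
      ((K₁ * K₂ * K₃ * K₄) ^ 2 * s ^ 3 * EL ^ 2 * ER ^ 2) := by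
    simp only [A, exchangeAmplitude, bispectrumShape, EL, e₂, e₃, ER, f₂, f₃]
    ring
  calc
    _ = A * ((X 1 - X (-1)) / (K₁ * K₂ * K₃ * K₄)) := by
      rw [glued, glued]
      push_cast
      ring
    _ = _ := by
      rw [parity_odd, amplitude_eq]
      push_cast
      ring

end
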